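/- arXiv:1602.08247 — 5 statements merged into one kernel-verified Lean document; each statement's English description precedes it below -/
import Mathlib

section
/- For every n ≥ 1, the permutahedron P_n is a polytope of dimension n − 1: the direction of the affine span of P_n in ℝⁿ has dimension (finrank over ℝ) equal to n − 1. -/
/-!
Write `v_σ = ∑ i, i • e_{σ(i)}`. Two vertices differ by a combination of differences of standard
basis vectors, and exchanging the entries at two positions `i ≠ j` changes a vertex by a nonzero
multiple of `e_i - e_j`. Hence the affine span of `P_n` is parallel to that of the affinely
independent points `e_1, …, e_n`.
-/

open scoped BigOperators

/-- The vertex of the permutahedron associated to a permutation `σ` of `[n]`: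
the vector `(σ⁻¹(1), …, σ⁻¹(n))`, with values in `{1, …, n}`. -/
noncomputable def permVec (n : ℕ) (σ : Equiv.Perm (Fin n)) : EuclideanSpace ℝ (Fin n) :=
  WithLp.toLp 2 fun i => ((σ.symm i : ℕ) + 1 : ℝ)

/-- The permutahedron `P_n ⊆ ℝⁿ`: the convex hull of the vertices `v_σ`. -/
noncomputable def permutahedron (n : ℕ) : Set (EuclideanSpace ℝ (Fin n)) :=
  convexHull ℝ (Set.range (permVec n))

section RearrangedSums

variable {ι K V : Type*} [Fintype ι] [AddCommGroup V]

theorem sum_smul_sub_sum_smul_swap [DecidableEq ι] [Ring K] [Module K V] (x : ι → K) (p : ι → V)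
    (a b : ι) :
    ∑ i, x i • p i - ∑ i, x i • p (Equiv.swap a b i) = (x a - x b) • (p a - p b) := by
  obtain rfl | hab := eq_or_ne a b
  · simp
  have fixed : ∀ i, i ≠ a ∧ i ≠ b → x i • p i - x i • p (Equiv.swap a b i) = 0 := fun i hi => by
    rw [Equiv.swap_apply_of_ne_of_ne hi.1 hi.2, sub_self]
  rw [← Finset.sum_sub_distrib, Fintype.sum_eq_add a b hab fixed, Equiv.swap_apply_left,
    Equiv.swap_apply_right, sub_smul, smul_sub, smul_sub]
  abel

theorem vectorSpan_range_sum_smul_perm_le [Ring K] [Module K V] (x : ι → K) (p : ι → V) :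
    vectorSpan K (Set.range fun σ : Equiv.Perm ι => ∑ i, x i • p (σ i)) ≤
      vectorSpan K (Set.range p) := by
  rw [vectorSpan_def, Submodule.span_le]
  rintro _ ⟨_, ⟨σ, rfl⟩, _, ⟨τ, rfl⟩, rfl⟩
  simp only [vsub_eq_sub, ← Finset.sum_sub_distrib, ← smul_sub]
  exact Submodule.sum_smul_mem _ _ fun i _ =>
    vsub_mem_vectorSpan K (Set.mem_range_self _) (Set.mem_range_self _)

variable [DivisionRing K] [Module K V]

theorem sub_mem_vectorSpan_range_sum_smul_perm {x : ι → K} {a b : ι} (hx : x a ≠ x b) (p : ι → V)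
    {i j : ι} (hij : i ≠ j) :
    p i - p j ∈ vectorSpan K (Set.range fun σ : Equiv.Perm ι => ∑ k, x k • p (σ k)) := by
  classical
  obtain ⟨σ, rfl, rfl⟩ : ∃ σ : Equiv.Perm ι, σ a = i ∧ σ b = j :=
    MulAction.is_two_pretransitive_iff.mp (Equiv.Perm.isMultiplyPretransitive ι 2)
      (ne_of_apply_ne x hx) hij
  rw [← Submodule.smul_mem_iff _ (sub_ne_zero.mpr hx),
    ← sum_smul_sub_sum_smul_swap x (fun k => p (σ k)) a b]
  exact vsub_mem_vectorSpan K ⟨σ, rfl⟩ ⟨σ * Equiv.swap a b, rfl⟩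

theorem vectorSpan_range_sum_smul_perm {x : ι → K} (hx : Nontrivial ι → ∃ a b, x a ≠ x b)
    (p : ι → V) :
    vectorSpan K (Set.range fun σ : Equiv.Perm ι => ∑ i, x i • p (σ i)) =
      vectorSpan K (Set.range p) := by
  refine (vectorSpan_range_sum_smul_perm_le x p).antisymm ?_
  rw [vectorSpan_def K (Set.range p), Submodule.span_le]
  rintro _ ⟨_, ⟨i, rfl⟩, _, ⟨j, rfl⟩, rfl⟩
  obtain rfl | hij := eq_or_ne i j
  · simp
  · obtain ⟨a, b, hab⟩ := hx ⟨i, j, hij⟩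
    exact sub_mem_vectorSpan_range_sum_smul_perm hab p hij

end RearrangedSums

theorem permVec_eq_sum_smul_single (n : ℕ) (σ : Equiv.Perm (Fin n)) :
    permVec n σ = ∑ i : Fin n, ((i : ℝ) + 1) • EuclideanSpace.single (σ i) (1 : ℝ) := by
  ext j
  simp [permVec, Pi.single_apply, ← Equiv.symm_apply_eq]

theorem direction_affineSpan_permutahedron (n : ℕ) :
    (affineSpan ℝ (permutahedron n)).direction =
      vectorSpan ℝ (Set.range fun i : Fin n => EuclideanSpace.single i (1 : ℝ)) := by
  have coeff_injective : Function.Injective fun i : Fin n => (i : ℝ) + 1 :=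
    (add_left_injective 1).comp (Nat.cast_injective.comp Fin.val_injective)
  have coeff_nonconstant : Nontrivial (Fin n) → ∃ a b : Fin n, (a : ℝ) + 1 ≠ (b : ℝ) + 1 := fun _ =>
    let ⟨a, b, hab⟩ := exists_pair_ne (Fin n)
    ⟨a, b, coeff_injective.ne hab⟩
  rw [permutahedron, affineSpan_convexHull, direction_affineSpan,
    funext (permVec_eq_sum_smul_single n)]
  exact vectorSpan_range_sum_smul_perm coeff_nonconstant fun i => EuclideanSpace.single i (1 : ℝ)

/-- `P_n` is a polytope of dimension `n - 1`: the direction of its affine span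
has dimension `n - 1`. -/
theorem permutahedron_dim (n : ℕ) (hn : 1 ≤ n) :
    Module.finrank ℝ (affineSpan ℝ (permutahedron n)).direction = n - 1 := by
  have hcard : Fintype.card (Fin n) = n - 1 + 1 := by
    rw [Fintype.card_fin, Nat.sub_add_cancel hn]
  rw [direction_affineSpan_permutahedron]
  exact (PiLp.linearIndependent_single_one 2 (𝕜 := ℝ)).affineIndependent.finrank_vectorSpan hcard
end

section
/- Let n ≥ 2 and let σ, τ be distinct permutations of [n]. Then the Euclidean distance ‖v_σ − v_τ‖ ≥ √2, and equality holds if and only if there exists j ∈ {1,…,n−1} such that τ = σ ∘ (j j+1), where (j j+1) denotes the transposition of [n] exchanging j and j+1 (equivalently, v_τ is obtained from v_σ by switching two coordinate values that differ by 1). In particular, √2 is the minimal distance between two distinct vertices of the permutahedron P_n. -/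
open scoped BigOperators

/-!
With `π = σ⁻¹ * τ`, the squared distance between `v_σ` and `v_τ` is `∑ k, (π k - k) ^ 2`. Every
point moved by `π` contributes at least `1` to this sum, and a permutation other than the identity
moves at least two points. If the sum is `2`, exactly two points are moved, so `π` is a
transposition, and each of the two is moved by exactly one step.
-/

section SqDisplacement

open Equiv

variable {α : Type*} [Fintype α]

/-- The total squared displacement `∑ a, (f (π a) - f a) ^ 2` of a permutation `π` of a finite type
whose points sit at the integer positions `f`; it measures how far `π` is from the identity.
Integer positions force every nonzero displacement to be at least `1`. -/
def sqDisplacement (f : α → ℤ) (π : Perm α) : ℤ :=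
  ∑ a, (f (π a) - f a) ^ 2

theorem sqDisplacement_one (f : α → ℤ) : sqDisplacement f 1 = 0 := by
  simp [sqDisplacement]

theorem sqDisplacement_eq_sum_support [DecidableEq α] (f : α → ℤ) (π : Perm α) :
    sqDisplacement f π = ∑ a ∈ π.support, (f (π a) - f a) ^ 2 := by
  refine (Finset.sum_subset (Finset.subset_univ _) fun a _ ha => ?_).symm
  rw [Perm.notMem_support.1 ha, sub_self, zero_pow two_ne_zero]

theorem sqDisplacement_swap [DecidableEq α] (f : α → ℤ) (x y : α) :
    sqDisplacement f (swap x y) = 2 * (f y - f x) ^ 2 := by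
  rcases eq_or_ne x y with rfl | hxy
  · rw [swap_self, ← Perm.one_def, sqDisplacement_one, sub_self, zero_pow two_ne_zero, mul_zero]
  · rw [sqDisplacement_eq_sum_support, Perm.support_swap hxy, Finset.sum_pair hxy,
      swap_apply_left, swap_apply_right]
    ring

theorem card_support_le_sqDisplacement [DecidableEq α] {f : α → ℤ} (hf : f.Injective)
    (π : Perm α) : (π.support.card : ℤ) ≤ sqDisplacement f π := by
  rw [sqDisplacement_eq_sum_support, ← nsmul_one]
  refine Finset.card_nsmul_le_sum _ _ _ fun a ha => ?_
  have hne : f (π a) - f a ≠ 0 := sub_ne_zero.2 (hf.ne (Perm.mem_support.1 ha))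
  exact Int.add_one_le_of_lt (sq_pos_of_ne_zero hne)

theorem two_le_sqDisplacement {f : α → ℤ} (hf : f.Injective) {π : Perm α} (hπ : π ≠ 1) :
    2 ≤ sqDisplacement f π := by
  classical
  exact le_trans (mod_cast Perm.two_le_card_support_of_ne_one hπ)
    (card_support_le_sqDisplacement hf π)

theorem isSwap_of_sqDisplacement_eq_two [DecidableEq α] {f : α → ℤ} (hf : f.Injective)
    {π : Perm α} (h : sqDisplacement f π = 2) : π.IsSwap := by
  have hπ : π ≠ 1 := by
    rintro rfl
    simp [sqDisplacement_one] at h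
  have hcard : (π.support.card : ℤ) ≤ 2 := h ▸ card_support_le_sqDisplacement hf π
  exact Perm.card_support_eq_two.1
    (le_antisymm (mod_cast hcard) (Perm.two_le_card_support_of_ne_one hπ))

theorem sqDisplacement_eq_two_iff [DecidableEq α] {f : α → ℤ} (hf : f.Injective)
    {π : Perm α} : sqDisplacement f π = 2 ↔ ∃ x y, f y = f x + 1 ∧ π = swap x y := by
  constructor
  · intro h
    obtain ⟨x, y, -, rfl⟩ := isSwap_of_sqDisplacement_eq_two hf h
    have hsq : (f y - f x) ^ 2 = 1 := by linarith [sqDisplacement_swap f x y]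
    rcases sq_eq_one_iff.1 hsq with hxy | hyx
    · exact ⟨x, y, by linarith, rfl⟩
    · exact ⟨y, x, by linarith, swap_comm x y⟩
  · rintro ⟨x, y, hxy, rfl⟩
    rw [sqDisplacement_swap, hxy]
    ring

end SqDisplacement

theorem dist_permVec_eq_sqrt_sqDisplacement {n : ℕ} (σ τ : Equiv.Perm (Fin n)) :
    dist (permVec n σ) (permVec n τ) =
      √(sqDisplacement (fun k : Fin n => ((k : ℕ) : ℤ)) (σ⁻¹ * τ)) := by
  rw [EuclideanSpace.dist_eq, ← Equiv.sum_comp τ]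
  simp [permVec, sqDisplacement, Real.dist_eq, sq_abs]

/-- For distinct permutations `σ ≠ τ` of `[n]` (`n ≥ 2`), the Euclidean distance between
the vertices `v_σ` and `v_τ` of `P_n` is at least `√2`, with equality if and only if
`τ = σ ∘ (j j+1)` for some adjacent transposition `(j j+1)`.  In particular `√2` is the
minimal distance between distinct vertices of the permutahedron. -/
theorem dist_permVec (n : ℕ) (hn : 2 ≤ n) (σ τ : Equiv.Perm (Fin n)) (hστ : σ ≠ τ) :
    Real.sqrt 2 ≤ dist (permVec n σ) (permVec n τ) ∧
    (dist (permVec n σ) (permVec n τ) = Real.sqrt 2 ↔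
      ∃ j : ℕ, ∃ hj : j + 1 < n,
        τ = σ * Equiv.swap (⟨j, Nat.lt_of_succ_lt hj⟩ : Fin n) (⟨j + 1, hj⟩ : Fin n)) := by
  have hinj : Function.Injective fun k : Fin n => ((k : ℕ) : ℤ) :=
    Nat.cast_injective.comp Fin.val_injective
  have hle : 2 ≤ sqDisplacement (fun k : Fin n => ((k : ℕ) : ℤ)) (σ⁻¹ * τ) :=
    two_le_sqDisplacement hinj (mt inv_mul_eq_one.1 hστ)
  rw [dist_permVec_eq_sqrt_sqDisplacement]
  refine ⟨Real.sqrt_le_sqrt (mod_cast hle), ?_⟩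
  rw [Real.sqrt_inj (mod_cast zero_le_two.trans hle) zero_le_two, ← Int.cast_ofNat, Int.cast_inj,
    sqDisplacement_eq_two_iff hinj]
  simp only [inv_mul_eq_iff_eq_mul]
  constructor
  · rintro ⟨⟨j, _⟩, ⟨_, hj⟩, hsucc, hswap⟩
    obtain rfl : _ = j + 1 := mod_cast hsucc
    exact ⟨j, hj, hswap⟩
  · rintro ⟨j, hj, hswap⟩
    exact ⟨⟨j, Nat.lt_of_succ_lt hj⟩, ⟨j + 1, hj⟩, Nat.cast_succ j, hswap⟩
end

section
/- Let n ≥ 2 and let σ, τ be distinct permutations of [n]. The closed segment [v_σ, v_τ] is an exposed face of the permutahedron P_n if and only if there exists j ∈ {1,…,n−1} such that τ = σ ∘ (j j+1), where (j j+1) denotes the transposition of [n] exchanging j and j+1. That is, two vertices of P_n are adjacent (joined by an edge) exactly when one is obtained from the other by switching two coordinate values differing by 1. -/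
open scoped BigOperators

/-!
The face of `P_n` on which `⟪c, ·⟫` is maximal is the convex hull of the vertices it contains, and
by the rearrangement inequality these are the `v_ρ` for which `c ∘ ρ` is monotone. Hence
`[v_σ, v_τ]` is an exposed face iff for some `c` exactly `σ` and `τ` sort `c`. In that case
`c ∘ σ = c ∘ τ` takes the same value at two adjacent positions, and exchanging these turns `σ` into
`τ`. Conversely, the values of `σ⁻¹` with `j + 1` lowered to `j` are sorted exactly by `σ` and
`σ ∘ (j j+1)`.
-/

open scoped RealInnerProductSpace

section Convexity

theorem convexHull_inter_of_isExtreme {𝕜 E : Type*} [Semiring 𝕜] [PartialOrder 𝕜]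
    [IsOrderedRing 𝕜] [AddCommGroup E] [Module 𝕜 E] {s B : Set E}
    (hB : IsExtreme 𝕜 (convexHull 𝕜 s) B) (hBconv : Convex 𝕜 B) :
    convexHull 𝕜 (s ∩ B) = B := by
  have hull_subset : convexHull 𝕜 (s ∩ B) ⊆ B := convexHull_min Set.inter_subset_right hBconv
  have diff_convex : Convex 𝕜 (convexHull 𝕜 s \ B) := hB.convex_sdiff (convex_convexHull 𝕜 s)
  have mem_diff {x y z : E} (hx : x ∈ convexHull 𝕜 s \ B) (hy : y ∈ convexHull 𝕜 (s ∩ B))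
      (hz : z ∈ openSegment 𝕜 x y) : z ∈ convexHull 𝕜 s \ B := by
    have hy' : y ∈ convexHull 𝕜 s := convexHull_mono Set.inter_subset_left hy
    exact ⟨(convex_convexHull 𝕜 s).openSegment_subset hx.1 hy' hz,
      fun hzB => hx.2 (hB.left_mem_of_mem_openSegment hx.1 hy' hzB hz)⟩
  have union_convex : Convex 𝕜 (convexHull 𝕜 s \ B ∪ convexHull 𝕜 (s ∩ B)) := by
    rw [convex_iff_openSegment_subset]
    rintro x (hx | hx) y (hy | hy) z hz
    · exact .inl (diff_convex.openSegment_subset hx hy hz)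
    · exact .inl (mem_diff hx hy hz)
    · exact .inl (mem_diff hy hx (openSegment_symm 𝕜 x y ▸ hz))
    · exact .inr ((convex_convexHull 𝕜 _).openSegment_subset hx hy hz)
  have subset_union : convexHull 𝕜 s ⊆ convexHull 𝕜 s \ B ∪ convexHull 𝕜 (s ∩ B) := by
    refine convexHull_min (fun x hx => ?_) union_convex
    by_cases hxB : x ∈ B
    · exact .inr (subset_convexHull 𝕜 _ ⟨hx, hxB⟩)
    · exact .inl ⟨subset_convexHull 𝕜 s hx, hxB⟩
  exact hull_subset.antisymm fun x hx =>
    (subset_union (hB.subset hx)).resolve_left fun hx' => hx'.2 hx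

theorem mem_extremePoints_of_subset_closedBall {E : Type*} [NormedAddCommGroup E]
    [NormedSpace ℝ E] [StrictConvexSpace ℝ E] {A : Set E} {x : E} (hx : x ∈ A)
    (hA : A ⊆ Metric.closedBall 0 ‖x‖) : x ∈ A.extremePoints ℝ := by
  refine inter_extremePoints_subset_extremePoints_of_subset hA ⟨hx, ?_⟩
  rcases eq_or_ne x 0 with rfl | hx0
  · simp
  · exact StrictConvexSpace.sphere_subset_extremePoints_closedBall 0 (norm_ne_zero_iff.2 hx0)
      (by simp)

theorem mem_toExposed_convexHull_iff {𝕜 E : Type*} [TopologicalSpace 𝕜] [Ring 𝕜]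
    [PartialOrder 𝕜] [IsOrderedRing 𝕜] [AddCommMonoid E] [TopologicalSpace E] [Module 𝕜 E]
    (l : StrongDual 𝕜 E) {s : Set E} {x : E} (hx : x ∈ s) :
    x ∈ l.toExposed (convexHull 𝕜 s) ↔ ∀ y ∈ s, l y ≤ l x := by
  have hconv : Convex 𝕜 {y | l y ≤ l x} := convex_halfSpace_le l.toLinearMap.isLinear _
  exact (and_iff_right (subset_convexHull 𝕜 s hx)).trans hconv.convexHull_subset_iff

theorem isExposed_iff_exists_inner {E : Type*} [NormedAddCommGroup E] [InnerProductSpace ℝ E]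
    [CompleteSpace E] {A B : Set E} (hB : B.Nonempty) :
    IsExposed ℝ A B ↔ ∃ c : E, (innerSL ℝ c).toExposed A = B := by
  refine ⟨fun h => ?_, fun ⟨c, hc⟩ => hc ▸ ContinuousLinearMap.toExposed.isExposed⟩
  obtain ⟨l, hl⟩ := h hB
  obtain ⟨c, rfl⟩ := (InnerProductSpace.toDual ℝ E).surjective l
  exact ⟨c, hl.symm⟩

end Convexity

section Sorting

open Equiv

variable {n : ℕ}

theorem forall_sum_comp_perm_mul_le_iff {R : Type*} [Semiring R] [LinearOrder R]
    [IsStrictOrderedRing R] [ExistsAddOfLE R] (f : Fin n → R) {g : Fin n → R} (hg : StrictMono g) :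
    (∀ π : Perm (Fin n), ∑ k, f (π k) * g k ≤ ∑ k, f k * g k) ↔ Monotone f := by
  refine ⟨fun hmax => ?_, fun hf π => (hf.monovary hg.monotone).sum_comp_perm_mul_le_sum_mul⟩
  set π := Tuple.sort f
  have hsorted : Monovary (f ∘ π) g := (Tuple.monotone_sort f).monovary hg.monotone
  have hunsort : (f ∘ π) ∘ ⇑π⁻¹ = f := by ext k; simp
  have hle : ∑ k, f k * g k ≤ ∑ k, (f ∘ π) k * g k := by
    simpa using hsorted.sum_comp_perm_mul_le_sum_mul (σ := π⁻¹)
  have heq : ∑ k, (f ∘ π) (π⁻¹ k) * g k = ∑ k, (f ∘ π) k * g k := by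
    simpa using hle.antisymm (hmax π)
  exact hg.trans_monovary (hunsort ▸ hsorted.sum_comp_perm_mul_eq_sum_mul_iff.1 heq)

theorem exists_covBy_of_monotone_comp_perm_iff {α : Type*} [PartialOrder α] {c : Fin n → α}
    {σ τ : Perm (Fin n)} (hστ : σ ≠ τ)
    (hc : ∀ ρ : Perm (Fin n), Monotone (c ∘ ρ) ↔ ρ = σ ∨ ρ = τ) :
    ∃ a b, a ⋖ b ∧ τ = σ * swap a b := by
  have hσ : Monotone (c ∘ σ) := (hc σ).2 (.inl rfl)
  have hτ : Monotone (c ∘ τ) := (hc τ).2 (.inr rfl)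
  have hnot : ¬ StrictMono (c ∘ σ) := fun hstrict =>
    hστ <| Equiv.ext fun k => by
      have : (c ∘ σ) k = (c ∘ σ) (σ⁻¹ (τ k)) := by
        simpa using congrFun (Tuple.unique_monotone hσ hτ) k
      simpa using congrArg σ (hstrict.injective this)
  obtain ⟨a, b, hab, heq⟩ : ∃ a b, a ⋖ b ∧ c (σ a) = c (σ b) := by
    by_contra! hne
    exact hnot <| strictMono_iff_forall_covBy _ |>.2 fun a b hab =>
      (hσ hab.le).lt_of_ne (hne a b hab)
  have hswap : c ∘ ⇑(σ * swap a b) = c ∘ σ := by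
    ext k
    simp only [Function.comp_apply, Perm.mul_apply]
    grind
  refine ⟨a, b, hab, ?_⟩
  rcases (hc (σ * swap a b)).1 (hswap ▸ hσ) with h | h
  · exact absurd (swap_eq_one_iff.1 (mul_eq_left.1 h)) hab.ne
  · exact h.symm

theorem monotone_update_id_of_covBy {α : Type*} [LinearOrder α] {a b : α} (hab : a ⋖ b) :
    Monotone (Function.update id b a) := by
  intro x y hxy
  have hlt : a < b := hab.lt
  have hle : x < b → x ≤ a := hab.le_of_lt
  simp only [Function.update_apply, id]
  grind

theorem update_id_comp_perm_eq_iff {α : Type*} [DecidableEq α] (a b : α) (π : Perm α) :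
    Function.update id b a ∘ π = Function.update id b a ↔ π = 1 ∨ π = swap a b := by
  constructor
  · intro h
    have hfib (k : α) : Function.update id b a (π k) = Function.update id b a k := congrFun h k
    simp only [Function.update_apply, id] at hfib
    have hfix {k : α} (hka : k ≠ a) (hkb : k ≠ b) : π k = k := by grind
    have hπa : π a = a ∨ π a = b := by grind
    have hπb : π b = a ∨ π b = b := by grind
    have hinj : π a = π b → a = b := fun hab => π.injective hab
    rcases hπa with hπa | hπa
    · exact .inl (Equiv.ext fun k => by grind [Perm.one_apply])
    · exact .inr (Equiv.ext fun k => by grind)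
  · rintro (rfl | rfl)
    · rfl
    · ext k
      grind [Function.update_apply]

theorem monotone_update_id_comp_perm_iff {a b : Fin n} (hab : a ⋖ b) (π : Perm (Fin n)) :
    Monotone (Function.update id b a ∘ π) ↔ π = 1 ∨ π = swap a b := by
  have hmono : Monotone (Function.update id b a) := monotone_update_id_of_covBy hab
  rw [← update_id_comp_perm_eq_iff]
  exact ⟨fun hπ => Tuple.unique_monotone (τ := 1) hπ hmono, fun hπ => hπ.symm ▸ hmono⟩

theorem exists_monotone_comp_perm_iff {σ τ : Perm (Fin n)} (hστ : σ ≠ τ) :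
    (∃ c : Fin n → ℝ, ∀ ρ : Perm (Fin n), Monotone (c ∘ ρ) ↔ ρ = σ ∨ ρ = τ) ↔
      ∃ a b, a ⋖ b ∧ τ = σ * swap a b := by
  refine ⟨fun ⟨c, hc⟩ => exists_covBy_of_monotone_comp_perm_iff hστ hc, ?_⟩
  rintro ⟨a, b, hab, rfl⟩
  refine ⟨fun i => (Function.update id b a (σ⁻¹ i) : Fin n), fun ρ => ?_⟩
  calc Monotone (fun k => ((Function.update id b a (σ⁻¹ (ρ k)) : Fin n) : ℝ))
    _ ↔ Monotone (Function.update id b a ∘ ⇑(σ⁻¹ * ρ)) := by simp [Monotone]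
    _ ↔ σ⁻¹ * ρ = 1 ∨ σ⁻¹ * ρ = swap a b := monotone_update_id_comp_perm_iff hab _
    _ ↔ ρ = σ ∨ ρ = σ * swap a b := by
      rw [inv_mul_eq_one, inv_mul_eq_iff_eq_mul, eq_comm (a := σ)]

end Sorting

section Permutahedron

open Equiv

variable {n : ℕ}

theorem permVec_injective : Function.Injective (permVec n) := by
  intro σ τ h
  refine symm_bijective.injective (Equiv.ext fun i => ?_)
  simpa [permVec, Fin.ext_iff] using congrArg (· i) h

theorem permVec_mem_permutahedron (σ : Perm (Fin n)) : permVec n σ ∈ permutahedron n :=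
  subset_convexHull ℝ _ ⟨σ, rfl⟩

theorem inner_permVec (c : EuclideanSpace ℝ (Fin n)) (σ : Perm (Fin n)) :
    ⟪c, permVec n σ⟫ = ∑ k, c (σ k) * ((k : ℕ) + 1 : ℝ) := by
  rw [PiLp.inner_apply, ← Equiv.sum_comp σ]
  simp [permVec, mul_comm]

theorem norm_permVec (σ : Perm (Fin n)) :
    ‖permVec n σ‖ = √(∑ k : Fin n, ((k : ℕ) + 1 : ℝ) ^ 2) := by
  rw [EuclideanSpace.norm_eq, ← Equiv.sum_comp σ]
  simp [permVec]

theorem permVec_mem_extremePoints (σ : Perm (Fin n)) :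
    permVec n σ ∈ (permutahedron n).extremePoints ℝ := by
  refine mem_extremePoints_of_subset_closedBall (permVec_mem_permutahedron σ)
    (convexHull_min ?_ (convex_closedBall _ _))
  rintro _ ⟨τ, rfl⟩
  rw [mem_closedBall_zero_iff, norm_permVec τ, norm_permVec σ]

theorem permVec_mem_segment_iff {ρ σ τ : Perm (Fin n)} :
    permVec n ρ ∈ segment ℝ (permVec n σ) (permVec n τ) ↔ ρ = σ ∨ ρ = τ := by
  constructor
  · intro hρ
    have := (mem_extremePoints_iff_forall_segment.1 (permVec_mem_extremePoints ρ)).2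
      _ (permVec_mem_permutahedron σ) _ (permVec_mem_permutahedron τ) hρ
    simpa only [permVec_injective.eq_iff, eq_comm] using this
  · rintro (rfl | rfl)
    · exact left_mem_segment ℝ _ _
    · exact right_mem_segment ℝ _ _

theorem eq_segment_permVec_iff_of_isExtreme {B : Set (EuclideanSpace ℝ (Fin n))}
    (hB : IsExtreme ℝ (permutahedron n) B) (hBconv : Convex ℝ B) {σ τ : Perm (Fin n)} :
    B = segment ℝ (permVec n σ) (permVec n τ) ↔ ∀ ρ, permVec n ρ ∈ B ↔ ρ = σ ∨ ρ = τ := by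
  refine ⟨fun h ρ => h ▸ permVec_mem_segment_iff, fun h => ?_⟩
  have hvertices : Set.range (permVec n) ∩ B = {permVec n σ, permVec n τ} := by
    rw [← Set.image_preimage_eq_range_inter, ← Set.image_pair]
    exact congrArg _ (Set.ext h)
  rw [← convexHull_inter_of_isExtreme hB hBconv, hvertices, convexHull_pair]

theorem permVec_mem_toExposed_iff (c : EuclideanSpace ℝ (Fin n)) (σ : Perm (Fin n)) :
    permVec n σ ∈ (innerSL ℝ c).toExposed (permutahedron n) ↔ Monotone (c ∘ σ) := by
  have hg : StrictMono fun k : Fin n => ((k : ℕ) + 1 : ℝ) := fun a b hab => by simpa using hab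
  rw [← forall_sum_comp_perm_mul_le_iff (c ∘ σ) hg, permutahedron,
    mem_toExposed_convexHull_iff _ (Set.mem_range_self σ), Set.forall_mem_range,
    ← (Equiv.mulLeft σ).forall_congr_right]
  simp only [innerSL_apply_apply, inner_permVec, coe_mulLeft, Perm.mul_apply, Function.comp_apply]

theorem isExposed_segment_permVec_iff (σ τ : Perm (Fin n)) :
    IsExposed ℝ (permutahedron n) (segment ℝ (permVec n σ) (permVec n τ)) ↔
      ∃ c : Fin n → ℝ, ∀ ρ : Perm (Fin n), Monotone (c ∘ ρ) ↔ ρ = σ ∨ ρ = τ := by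
  rw [isExposed_iff_exists_inner ⟨_, left_mem_segment ℝ _ _⟩,
    (WithLp.equiv 2 (Fin n → ℝ)).surjective.exists]
  refine exists_congr fun c => ?_
  have hface : IsExposed ℝ (permutahedron n) ((innerSL ℝ c).toExposed (permutahedron n)) :=
    ContinuousLinearMap.toExposed.isExposed
  rw [eq_segment_permVec_iff_of_isExtreme hface.isExtreme (hface.convex (convex_convexHull ℝ _))]
  simp only [permVec_mem_toExposed_iff, WithLp.equiv_apply]

end Permutahedron

/-- For distinct permutations `σ ≠ τ` of `[n]` (`n ≥ 2`), the segment `[v_σ, v_τ]` is an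
exposed face (an edge) of `P_n` if and only if `τ = σ ∘ (j j+1)` for some adjacent
transposition `(j j+1)`. -/
theorem segment_isExposed_iff (n : ℕ) (hn : 2 ≤ n) (σ τ : Equiv.Perm (Fin n)) (hστ : σ ≠ τ) :
    IsExposed ℝ (permutahedron n) (segment ℝ (permVec n σ) (permVec n τ)) ↔
      ∃ j : ℕ, ∃ hj : j + 1 < n,
        τ = σ * Equiv.swap (⟨j, Nat.lt_of_succ_lt hj⟩ : Fin n) (⟨j + 1, hj⟩ : Fin n) := by
  rw [isExposed_segment_permVec_iff, exists_monotone_comp_perm_iff hστ]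
  simp only [Fin.covBy_iff, Nat.covBy_iff_add_one_eq]
  constructor
  · rintro ⟨⟨j, _⟩, ⟨_, hj⟩, rfl, h⟩
    exact ⟨j, hj, h⟩
  · rintro ⟨j, hj, h⟩
    exact ⟨_, _, rfl, h⟩
end

section
/- Let n ≥ 1, let k ≥ 1, and let (B₁, …, B_k) be an ordered partition of [n] into nonempty pairwise disjoint sets with union [n]. For 1 ≤ r ≤ k set M_r = |B₁| + … + |B_r|. Then the convex hull of {v_τ : τ compatible with (B₁, …, B_k)} equals the set {x ∈ P_n : ∀ r ∈ {1,…,k}, ∑_{i ∈ B₁ ∪ … ∪ B_r} x_i = M_r(M_r+1)/2}. -/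
open scoped BigOperators

/-- A permutation `τ` of `[n]` is compatible with the ordered partition `(B 0, …, B (k-1))`
of `[n]` if for all `p < q`, `i ∈ B p` and `j ∈ B q` imply `τ⁻¹(i) < τ⁻¹(j)`. -/
def PermCompatible (n k : ℕ) (B : Fin k → Finset (Fin n)) (τ : Equiv.Perm (Fin n)) : Prop :=
  ∀ p q : Fin k, p < q → ∀ i ∈ B p, ∀ j ∈ B q, τ.symm i < τ.symm j

/-!
Since `σ⁻¹(i) + 1` is the number of positions up to `σ⁻¹(i)`, the coordinates of `v_σ` indexed by
a set `T` with `m` elements sum to the number of pairs of positions `b ≤ a` with `a ∈ σ⁻¹(T)`.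
There are `m (m + 1) / 2` such pairs with `b ∈ σ⁻¹(T)` as well, and no others exactly when `σ⁻¹(T)`
is an initial segment. A permutation `τ` is compatible with `(B₁, …, B_k)` exactly when every
`τ⁻¹(B₁ ∪ … ∪ B_r)` is an initial segment, so the equations say that certain linear functionals
attain their minimum over `P_n`. They cut out a face, and a face of a convex hull is the convex
hull of the generating points it contains.
-/

section ConvexHull

variable {𝕜 E : Type*}

theorem convexHull_inter_eq_of_isExtreme [Semiring 𝕜] [PartialOrder 𝕜] [AddCommMonoid E]
    [Module 𝕜 E] {s F : Set E} (hF : IsExtreme 𝕜 (convexHull 𝕜 s) F) (hconv : Convex 𝕜 F) :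
    convexHull 𝕜 (s ∩ F) = F := by
  refine (convexHull_min Set.inter_subset_right hconv).antisymm fun x hx => ?_
  let C : Set E := {y ∈ convexHull 𝕜 s | y ∈ F → y ∈ convexHull 𝕜 (s ∩ F)}
  have hsC : s ⊆ C := fun y hy =>
    ⟨subset_convexHull 𝕜 s hy, fun hyF => subset_convexHull 𝕜 _ ⟨hy, hyF⟩⟩
  have hC : Convex 𝕜 C := by
    refine convex_iff_forall_pos.2 fun y hy z hz a b ha hb hab =>
      ⟨convex_convexHull 𝕜 s hy.1 hz.1 ha.le hb.le hab, fun hyz => ?_⟩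
    have hmem : a • y + b • z ∈ openSegment 𝕜 y z := ⟨a, b, ha, hb, hab, rfl⟩
    have hyF : y ∈ F := hF.left_mem_of_mem_openSegment hy.1 hz.1 hyz hmem
    have hzF : z ∈ F := hF.right_mem_of_mem_openSegment hy.1 hz.1 hyz hmem
    exact convex_convexHull 𝕜 _ (hy.2 hyF) (hz.2 hzF) ha.le hb.le hab
  exact (convexHull_min hsC hC (hF.subset hx)).2 hx

variable {β : Type*} [Semiring 𝕜] [PartialOrder 𝕜] [AddCommMonoid E] [Module 𝕜 E]
  [AddCommMonoid β] [PartialOrder β] [IsOrderedCancelAddMonoid β] [Module 𝕜 β]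
  [PosSMulStrictMono 𝕜 β]

theorem isExtreme_setOf_eq_of_forall_le {A : Set E} (f : E →ₗ[𝕜] β) {c : β}
    (h : ∀ x ∈ A, c ≤ f x) : IsExtreme 𝕜 A {x ∈ A | f x = c} := by
  refine ⟨Set.sep_subset _ _, ?_⟩
  rintro x hx y hy _ ⟨-, hz⟩ ⟨a, b, ha, hb, hab, rfl⟩
  refine ⟨hx, by_contra fun hne => lt_irrefl c ?_⟩
  calc c = a • c + b • c := by rw [← add_smul, hab, one_smul]
    _ < a • f x + b • f y :=
      add_lt_add_of_lt_of_le (smul_lt_smul_of_pos_left ((h x hx).lt_of_ne' hne) ha)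
        (smul_le_smul_of_nonneg_left (h y hy) hb.le)
    _ = c := by rw [← hz, map_add, map_smul, map_smul]

theorem convexHull_sep_eq_of_forall_le {s : Set E} (f : E →ₗ[𝕜] β) {c : β}
    (h : ∀ x ∈ s, c ≤ f x) :
    convexHull 𝕜 {x ∈ s | f x = c} = {x ∈ convexHull 𝕜 s | f x = c} := by
  have hhull : ∀ x ∈ convexHull 𝕜 s, c ≤ f x :=
    convexHull_min h (convex_halfSpace_ge f.isLinear c)
  have hconv : Convex 𝕜 {x ∈ convexHull 𝕜 s | f x = c} :=
    (convex_convexHull 𝕜 s).inter (convex_hyperplane f.isLinear c)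
  rw [← convexHull_inter_eq_of_isExtreme (isExtreme_setOf_eq_of_forall_le f hhull) hconv]
  congr 1
  ext x
  exact ⟨fun hx => ⟨hx.1, subset_convexHull 𝕜 s hx.1, hx.2⟩, fun hx => ⟨hx.1, hx.2.2⟩⟩

end ConvexHull

section LowerSet

variable {α : Type*} [LinearOrder α]

theorem sum_card_filter_le_eq_choose_two (S : Finset α) :
    ∑ a ∈ S, (S.filter (· ≤ a)).card = (S.card + 1).choose 2 := by
  induction S using Finset.induction_on_max with
  | empty => rfl
  | insert m S hm ih =>
    have hmS : m ∉ S := fun h => (hm m h).false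
    have hlt : ∀ a ∈ S, (insert m S).filter (· ≤ a) = S.filter (· ≤ a) := fun a ha => by
      rw [Finset.filter_insert, if_neg (hm a ha).not_ge]
    have hmax : (insert m S).filter (· ≤ m) = insert m S :=
      Finset.filter_true_of_mem fun a ha =>
        (Finset.mem_insert.1 ha).elim Eq.le fun h => (hm a h).le
    rw [Finset.sum_insert hmS, hmax, Finset.sum_congr rfl fun a ha => congrArg _ (hlt a ha), ih,
      Finset.card_insert_of_notMem hmS, Nat.choose_succ_succ' (S.card + 1), Nat.choose_one_right]

theorem isLowerSet_image_equiv_iff {γ : Type*} (e : γ ≃ α) (T : Set γ) :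
    IsLowerSet (e '' T) ↔ ∀ i ∈ T, ∀ j ∉ T, e i < e j := by
  constructor
  · intro h i hi j hj
    by_contra! hle
    exact hj (e.injective.mem_set_image.1 (h hle (Set.mem_image_of_mem e hi)))
  · rintro h _ b hb ⟨i, hi, rfl⟩
    by_contra hbT
    have hj : e.symm b ∉ T := fun hj => hbT ⟨_, hj, e.apply_symm_apply b⟩
    exact (h i hi _ hj).not_ge (by rwa [e.apply_symm_apply])

variable [LocallyFiniteOrderBot α]

theorem filter_le_subset_Iic (S : Finset α) (a : α) : S.filter (· ≤ a) ⊆ Finset.Iic a :=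
  fun _ hb => Finset.mem_Iic.2 (Finset.mem_filter.1 hb).2

theorem choose_two_le_sum_card_Iic (S : Finset α) :
    (S.card + 1).choose 2 ≤ ∑ a ∈ S, (Finset.Iic a).card := by
  rw [← sum_card_filter_le_eq_choose_two]
  exact Finset.sum_le_sum fun a _ => Finset.card_le_card (filter_le_subset_Iic S a)

theorem sum_card_Iic_eq_choose_two_iff (S : Finset α) :
    ∑ a ∈ S, (Finset.Iic a).card = (S.card + 1).choose 2 ↔ IsLowerSet (S : Set α) := by
  have hcard (a : α) : (S.filter (· ≤ a)).card = (Finset.Iic a).card ↔ Finset.Iic a ⊆ S := by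
    have hsub := filter_le_subset_Iic S a
    refine ⟨fun h => ?_, fun h => congrArg _ (hsub.antisymm fun b hb => ?_)⟩
    · exact Finset.eq_of_subset_of_card_le hsub h.ge ▸ Finset.filter_subset _ _
    · exact Finset.mem_filter.2 ⟨h hb, Finset.mem_Iic.1 hb⟩
  rw [← sum_card_filter_le_eq_choose_two, eq_comm,
    Finset.sum_eq_sum_iff_of_le fun a _ => Finset.card_le_card (filter_le_subset_Iic S a)]
  simp only [hcard]
  exact ⟨fun h a b hba ha => h a ha (Finset.mem_Iic.2 hba),
    fun h a ha b hb => h (Finset.mem_Iic.1 hb) ha⟩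

end LowerSet

theorem cast_succ_choose_two (K : Type*) [Field K] [CharZero K] (m : ℕ) :
    ((m + 1).choose 2 : K) = m * (m + 1) / 2 := by
  rw [Nat.cast_choose_two]
  push_cast
  ring

section PermVec

variable {n : ℕ}

theorem sum_permVec (σ : Equiv.Perm (Fin n)) (T : Finset (Fin n)) :
    ∑ i ∈ T, permVec n σ i =
      ((∑ a ∈ T.map σ.symm.toEmbedding, (Finset.Iic a).card : ℕ) : ℝ) := by
  simp [permVec]

theorem card_mul_card_add_one_div_two_le_sum_permVec (σ : Equiv.Perm (Fin n))
    (T : Finset (Fin n)) : (T.card : ℝ) * (T.card + 1) / 2 ≤ ∑ i ∈ T, permVec n σ i := by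
  rw [sum_permVec, ← cast_succ_choose_two, Nat.cast_le]
  simpa only [Finset.card_map] using choose_two_le_sum_card_Iic (T.map σ.symm.toEmbedding)

theorem sum_permVec_eq_iff_forall_lt (σ : Equiv.Perm (Fin n)) (T : Finset (Fin n)) :
    ∑ i ∈ T, permVec n σ i = (T.card : ℝ) * (T.card + 1) / 2 ↔
      ∀ i ∈ T, ∀ j ∉ T, σ.symm i < σ.symm j := by
  have hlower := sum_card_Iic_eq_choose_two_iff (T.map σ.symm.toEmbedding)
  rw [Finset.card_map, Finset.coe_map, Equiv.coe_toEmbedding, isLowerSet_image_equiv_iff] at hlower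
  rw [sum_permVec, ← cast_succ_choose_two, Nat.cast_inj]
  exact hlower

end PermVec

section PrefixUnion

variable {κ α : Type*} [Fintype κ] [LinearOrder κ] [DecidableEq α]

/-- The union `B₁ ∪ … ∪ B_r` of the blocks of an indexed family up to and including `B r`. -/
def prefixUnion (B : κ → Finset α) (r : κ) : Finset α :=
  (Finset.univ.filter fun p => p ≤ r).biUnion B

theorem mem_prefixUnion {B : κ → Finset α} {r : κ} {i : α} :
    i ∈ prefixUnion B r ↔ ∃ p ≤ r, i ∈ B p := by
  simp [prefixUnion]

theorem card_prefixUnion {B : κ → Finset α} (hdisj : ∀ p q, p ≠ q → Disjoint (B p) (B q))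
    (r : κ) : (prefixUnion B r).card = ∑ p ∈ Finset.univ.filter fun p => p ≤ r, (B p).card :=
  Finset.card_biUnion fun p _ q _ => hdisj p q

theorem forall_block_lt_iff_forall_prefixUnion_lt {β : Type*} [LT β] {B : κ → Finset α}
    (hdisj : ∀ p q, p ≠ q → Disjoint (B p) (B q)) (hcov : ∀ i, ∃ p, i ∈ B p) (f : α → β) :
    (∀ p q, p < q → ∀ i ∈ B p, ∀ j ∈ B q, f i < f j) ↔
      ∀ r, ∀ i ∈ prefixUnion B r, ∀ j ∉ prefixUnion B r, f i < f j := by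
  simp only [mem_prefixUnion]
  constructor
  · rintro h r i ⟨p, hpr, hi⟩ j hj
    obtain ⟨q, hq⟩ := hcov j
    have hrq : r < q := not_le.1 fun hqr => hj ⟨q, hqr, hq⟩
    exact h p q (hpr.trans_lt hrq) i hi j hq
  · intro h p q hpq i hi j hj
    refine h p i ⟨p, le_rfl, hi⟩ j ?_
    rintro ⟨p', hp', hj'⟩
    exact Finset.disjoint_left.1 (hdisj p' q (hp'.trans_lt hpq).ne) hj' hj

/-- The linear map sending `x` to the family of its partial sums `∑_{i ∈ B₁ ∪ … ∪ B_r} x_i`.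
All the functionals are bundled into one map with values in the ordered space `κ → ℝ`, so that
they are minimized simultaneously. -/
noncomputable def prefixSum (B : κ → Finset α) : EuclideanSpace ℝ α →ₗ[ℝ] κ → ℝ :=
  LinearMap.pi fun r => ∑ i ∈ prefixUnion B r, EuclideanSpace.projₗ i

theorem prefixSum_apply (B : κ → Finset α) (x : EuclideanSpace ℝ α) (r : κ) :
    prefixSum B x r = ∑ i ∈ prefixUnion B r, x i := by
  simp [prefixSum]

/-- The vector of the numbers `M_r (M_r + 1) / 2`, where `M_r = |B₁ ∪ … ∪ B_r|`: the least values
of the coordinates of `prefixSum B` on the vertices of the permutahedron. -/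
noncomputable def minPrefixSum (B : κ → Finset α) (r : κ) : ℝ :=
  ((prefixUnion B r).card : ℝ) * ((prefixUnion B r).card + 1) / 2

end PrefixUnion

section Permutahedron

variable {n : ℕ}

theorem minPrefixSum_le_prefixSum_permVec {κ : Type*} [Fintype κ] [LinearOrder κ]
    (B : κ → Finset (Fin n)) (σ : Equiv.Perm (Fin n)) :
    minPrefixSum B ≤ prefixSum B (permVec n σ) := fun r => by
  rw [prefixSum_apply]
  exact card_mul_card_add_one_div_two_le_sum_permVec σ (prefixUnion B r)

theorem permCompatible_iff_prefixSum_permVec_eq {k : ℕ} {B : Fin k → Finset (Fin n)}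
    (hdisj : ∀ p q, p ≠ q → Disjoint (B p) (B q)) (hcov : Finset.univ.biUnion B = Finset.univ)
    (σ : Equiv.Perm (Fin n)) :
    PermCompatible n k B σ ↔ prefixSum B (permVec n σ) = minPrefixSum B := by
  have hmem (i : Fin n) : ∃ p, i ∈ B p := by
    simpa using hcov.ge (Finset.mem_univ i)
  rw [PermCompatible, forall_block_lt_iff_forall_prefixUnion_lt hdisj hmem, funext_iff]
  refine forall_congr' fun r => ?_
  rw [prefixSum_apply, minPrefixSum, sum_permVec_eq_iff_forall_lt]

end Permutahedron

/-- For an ordered partition `(B 0, …, B (k-1))` of `[n]` into nonempty pairwise disjoint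
sets, with `M r = |B 0| + ⋯ + |B r|`, the convex hull of the compatible vertices equals
the set of points `x ∈ P_n` satisfying, for each `r`,
`∑_{i ∈ B 0 ∪ ⋯ ∪ B r} x i = M r (M r + 1) / 2`. -/
theorem orderedPartition_face_eq (n k : ℕ) (hn : 1 ≤ n) (hk : 1 ≤ k)
    (B : Fin k → Finset (Fin n)) (hne : ∀ r, (B r).Nonempty)
    (hdisj : ∀ p q, p ≠ q → Disjoint (B p) (B q))
    (hcov : Finset.univ.biUnion B = Finset.univ) :
    convexHull ℝ (permVec n '' {τ | PermCompatible n k B τ}) =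
      {x ∈ permutahedron n | ∀ r : Fin k,
        ∑ i ∈ (Finset.univ.filter fun p => p ≤ r).biUnion B, x i =
          ((∑ p ∈ Finset.univ.filter fun p => p ≤ r, (B p).card : ℕ) : ℝ) *
            (((∑ p ∈ Finset.univ.filter fun p => p ≤ r, (B p).card : ℕ) : ℝ) + 1) / 2} := by
  have hcompat : permVec n '' {τ | PermCompatible n k B τ} =
      {x ∈ Set.range (permVec n) | prefixSum B x = minPrefixSum B} := by
    simp only [permCompatible_iff_prefixSum_permVec_eq hdisj hcov]
    exact Set.image_preimage_eq_range_inter (t := {x | prefixSum B x = minPrefixSum B})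
  have hmin : ∀ x ∈ Set.range (permVec n), minPrefixSum B ≤ prefixSum B x :=
    Set.forall_mem_range.2 (minPrefixSum_le_prefixSum_permVec B)
  rw [hcompat, convexHull_sep_eq_of_forall_le (prefixSum B) hmin]
  simp only [funext_iff, prefixSum_apply, minPrefixSum, card_prefixUnion hdisj]
  rfl
end

section
/- Let n ≥ 3, let k ≥ 2, and let m₁, …, m_k ≥ 1 satisfy m₁ + ⋯ + m_k = n − 1. Then there is a homeomorphism from the product X = P_{m₁} × P_{m₂} × ⋯ × P_{m_k} × Δ^k (with the subspace topology from ℝ^{m₁} × ⋯ × ℝ^{m_k} × ℝ^{k+1}) to the closed unit ball D^{n−1} ⊆ ℝ^{n−1} which maps the subset B = P_{m₁} × ⋯ × P_{m_k} × (⋃_{i=2}^{k} F_i) homeomorphically onto the closed lower hemisphere S^{n−2}₋. -/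
open scoped BigOperators

/-- The standard `k`-simplex `Δ^k ⊆ ℝ^{k+1}`. -/
def simplexSet (k : ℕ) : Set (EuclideanSpace ℝ (Fin (k + 1))) :=
  {x | (∀ i, 0 ≤ x i) ∧ ∑ i, x i = 1}

/-!
Choose a point `(c, a)` of the product whose coordinates `c r` are relatively interior and for which
`a i = 0` exactly when `i` belongs to the index set `I` of the chosen facets. Seen from `(c, a)`,
these facets are cut out by homogeneous inequalities, so the product is `K ∩ {0 ≤ s}`, where `K` is
a convex neighbourhood of the origin in the space of directions and `s` is the minimum of the
coordinates in `I`. As `s` is positively homogeneous and grows at unit speed in some direction `v`,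
a shear along `v` maps rays to rays and turns `s` into a linear height; rescaling the rays then
turns `K ∩ {0 ≤ s}` into a half ball whose flat face is the image of `{s = 0}`. Stretching the half
ball vertically onto the ball carries this flat face to the lower hemisphere.
-/

open Set Topology Module
open scoped RealInnerProductSpace

lemma exists_homeomorph_of_bijOn {X Y : Type*} [TopologicalSpace X] [TopologicalSpace Y]
    [T2Space Y] {f : X → Y} {s : Set X} {t : Set Y} (hs : IsCompact s) (hf : ContinuousOn f s)
    (hst : BijOn f s t) : ∃ φ : s ≃ₜ t, ∀ x : s, (φ x : Y) = f x := by
  have : CompactSpace s := isCompact_iff_compactSpace.1 hs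
  have hcont : Continuous (hst.equiv f) := hf.mapsToRestrict hst.mapsTo
  exact ⟨hcont.homeoOfEquivCompactToT2, fun _ => rfl⟩

section VerticalStretch

variable {E : Type*} [NormedAddCommGroup E] [InnerProductSpace ℝ E] {e : E}

/-- Half the length of the chord that the closed unit ball cuts from the line `z + ℝ e`, where `e`
is a unit vector; the value is junk when this line misses the ball. -/
noncomputable def halfChord (e z : E) : ℝ := √(1 - (‖z‖ ^ 2 - ⟪e, z⟫ ^ 2))

/-- The map taking the upper half `0 ≤ ⟪e, z⟫` of the unit ball onto the whole ball by stretching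
each chord in direction `e`: the height `y ∈ [0, h]` becomes `2 * y - h ∈ [-h, h]`. -/
noncomputable def verticalStretch (e z : E) : E := z + (⟪e, z⟫ - halfChord e z) • e

lemma continuous_verticalStretch (e : E) : Continuous (verticalStretch e) := by
  unfold verticalStretch halfChord
  fun_prop

lemma inner_add_smul_self (he : ‖e‖ = 1) (z : E) (t : ℝ) : ⟪e, z + t • e⟫ = ⟪e, z⟫ + t := by
  rw [inner_add_right, real_inner_smul_right, real_inner_self_eq_norm_sq, he]
  ring

lemma norm_add_smul_sq (he : ‖e‖ = 1) (z : E) (t : ℝ) :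
    ‖z + t • e‖ ^ 2 = ‖z‖ ^ 2 - ⟪e, z⟫ ^ 2 + (⟪e, z⟫ + t) ^ 2 := by
  rw [norm_add_sq_real, norm_smul, he, real_inner_smul_right, real_inner_comm, mul_one,
    Real.norm_eq_abs, sq_abs]
  ring

lemma halfChord_add_smul (he : ‖e‖ = 1) (z : E) (t : ℝ) :
    halfChord e (z + t • e) = halfChord e z := by
  rw [halfChord, halfChord, norm_add_smul_sq he, inner_add_smul_self he, add_sub_cancel_right]

lemma halfChord_nonneg (e z : E) : 0 ≤ halfChord e z := Real.sqrt_nonneg _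

lemma halfChord_sq {z : E} (hz : ‖z‖ ≤ 1) :
    halfChord e z ^ 2 = 1 - (‖z‖ ^ 2 - ⟪e, z⟫ ^ 2) :=
  Real.sq_sqrt <| by nlinarith [norm_nonneg z, sq_nonneg ⟪e, z⟫]

lemma norm_add_smul_le_one_iff (he : ‖e‖ = 1) {z : E} (hz : ‖z‖ ≤ 1) (t : ℝ) :
    ‖z + t • e‖ ≤ 1 ↔ |⟪e, z⟫ + t| ≤ halfChord e z := by
  rw [← sq_le_one_iff₀ (norm_nonneg _), ← sq_le_sq₀ (abs_nonneg _) (halfChord_nonneg e z), sq_abs,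
    halfChord_sq hz, norm_add_smul_sq he]
  constructor <;> intro h <;> linarith

lemma norm_add_smul_eq_one_iff (he : ‖e‖ = 1) {z : E} (hz : ‖z‖ ≤ 1) (t : ℝ) :
    ‖z + t • e‖ = 1 ↔ |⟪e, z⟫ + t| = halfChord e z := by
  rw [← pow_eq_one_iff_of_nonneg (norm_nonneg _) two_ne_zero,
    ← sq_eq_sq₀ (abs_nonneg _) (halfChord_nonneg e z), sq_abs, halfChord_sq hz,
    norm_add_smul_sq he]
  constructor <;> intro h <;> linarith

lemma abs_inner_le_halfChord (he : ‖e‖ = 1) {z : E} (hz : ‖z‖ ≤ 1) :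
    |⟪e, z⟫| ≤ halfChord e z := by
  simpa using (norm_add_smul_le_one_iff he hz 0).1 (by simpa using hz)

lemma inner_verticalStretch (he : ‖e‖ = 1) (z : E) :
    ⟪e, verticalStretch e z⟫ = 2 * ⟪e, z⟫ - halfChord e z := by
  rw [verticalStretch, inner_add_smul_self he]
  ring

lemma halfChord_verticalStretch (he : ‖e‖ = 1) (z : E) :
    halfChord e (verticalStretch e z) = halfChord e z :=
  halfChord_add_smul he z _

lemma mapsTo_verticalStretch (he : ‖e‖ = 1) :
    MapsTo (verticalStretch e) {z | ‖z‖ ≤ 1 ∧ 0 ≤ ⟪e, z⟫} {z | ‖z‖ ≤ 1} := by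
  rintro z ⟨hz, hpos⟩
  have hle := abs_le.1 (abs_inner_le_halfChord he hz)
  refine (norm_add_smul_le_one_iff he hz _).2 (abs_le.2 ⟨?_, ?_⟩) <;> linarith

lemma verticalStretch_injective (he : ‖e‖ = 1) : Function.Injective (verticalStretch e) := by
  intro z w h
  have hchord : halfChord e z = halfChord e w := by
    rw [← halfChord_verticalStretch he, h, halfChord_verticalStretch he]
  have hheight : ⟪e, z⟫ = ⟪e, w⟫ := by
    have := inner_verticalStretch he z
    rw [h, inner_verticalStretch he] at this
    linarith
  simpa only [verticalStretch, hchord, hheight, add_left_inj] using h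

lemma surjOn_verticalStretch (he : ‖e‖ = 1) :
    SurjOn (verticalStretch e) {z | ‖z‖ ≤ 1 ∧ 0 ≤ ⟪e, z⟫} {z | ‖z‖ ≤ 1} := by
  intro z hz
  obtain ⟨hlower, hupper⟩ := abs_le.1 (abs_inner_le_halfChord he hz)
  refine ⟨z + ((halfChord e z - ⟪e, z⟫) / 2) • e, ⟨?_, ?_⟩, ?_⟩
  · refine (norm_add_smul_le_one_iff he hz _).2 (abs_le.2 ⟨?_, ?_⟩) <;> linarith
  · rw [inner_add_smul_self he]
    linarith
  · rw [verticalStretch, inner_add_smul_self he, halfChord_add_smul he]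
    module

lemma bijOn_verticalStretch (he : ‖e‖ = 1) :
    BijOn (verticalStretch e) {z | ‖z‖ ≤ 1 ∧ 0 ≤ ⟪e, z⟫} {z | ‖z‖ ≤ 1} :=
  ⟨mapsTo_verticalStretch he, (verticalStretch_injective he).injOn, surjOn_verticalStretch he⟩

lemma verticalStretch_mem_lower_hemisphere_iff (he : ‖e‖ = 1) {z : E} (hz : ‖z‖ ≤ 1) :
    ‖verticalStretch e z‖ = 1 ∧ ⟪e, verticalStretch e z⟫ ≤ 0 ↔ ⟪e, z⟫ = 0 := by
  rw [inner_verticalStretch he, verticalStretch, norm_add_smul_eq_one_iff he hz]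
  constructor
  · rintro ⟨hnorm, hlow⟩
    rw [abs_of_nonpos (by linarith)] at hnorm
    linarith
  · intro h
    have := halfChord_nonneg e z
    simp [h, abs_of_nonneg this, this]

end VerticalStretch

section RadialRescale

/-- Homogeneity of degree one with respect to nonnegative scalars. -/
def PosHomogeneous {V W : Type*} [SMul ℝ V] [SMul ℝ W] (f : V → W) : Prop :=
  ∀ ⦃c : ℝ⦄, 0 ≤ c → ∀ x, f (c • x) = c • f x

lemma PosHomogeneous.map_zero {V W : Type*} [AddCommGroup V] [Module ℝ V] [AddCommGroup W]
    [Module ℝ W] {f : V → W} (hf : PosHomogeneous f) : f 0 = 0 := by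
  simpa only [zero_smul] using hf le_rfl 0

lemma PosHomogeneous.equiv_symm {V W : Type*} [SMul ℝ V] [SMul ℝ W] {σ : V ≃ W}
    (hσ : PosHomogeneous σ) : PosHomogeneous σ.symm := by
  intro c hc y
  rw [σ.symm_apply_eq, hσ hc, σ.apply_symm_apply]

lemma posHomogeneous_gauge {V : Type*} [AddCommGroup V] [Module ℝ V] (K : Set V) :
    PosHomogeneous (gauge K) := fun _ hc x => gauge_smul_of_nonneg hc x

variable {V E : Type*} [NormedAddCommGroup V] [NormedSpace ℝ V] [NormedAddCommGroup E]
  [NormedSpace ℝ E] {K : Set V} {σ : V ≃ₜ E}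

/-- The rescaling of a positively homogeneous homeomorphism `σ` along rays which turns the gauge of
`K` into the norm. -/
noncomputable def radialRescale (K : Set V) (σ : V ≃ₜ E) (x : V) : E :=
  (gauge K x / ‖σ x‖) • σ x

lemma PosHomogeneous.apply_ne_zero (hσ : PosHomogeneous σ) {x : V} (hx : x ≠ 0) : σ x ≠ 0 :=
  fun h => hx (σ.injective (h.trans hσ.map_zero.symm))

lemma norm_radialRescale (hσ : PosHomogeneous σ) (x : V) : ‖radialRescale K σ x‖ = gauge K x := by
  rcases eq_or_ne x 0 with rfl | hx
  · simp [radialRescale]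
  · rw [radialRescale, norm_smul, Real.norm_of_nonneg (by positivity [gauge_nonneg (s := K) x]),
      div_mul_cancel₀ _ (norm_ne_zero_iff.2 (hσ.apply_ne_zero hx))]

lemma continuous_radialRescale (hσ : PosHomogeneous σ) (hK : Convex ℝ K) (hK0 : K ∈ 𝓝 0) :
    Continuous (radialRescale K σ) := by
  have hgauge := continuous_gauge hK hK0
  refine continuous_iff_continuousAt.2 fun x => ?_
  rcases eq_or_ne x 0 with rfl | hx
  · have hzero : radialRescale K σ 0 = 0 := by simp [radialRescale]
    rw [ContinuousAt, hzero, tendsto_zero_iff_norm_tendsto_zero]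
    simpa only [norm_radialRescale hσ, gauge_zero] using hgauge.tendsto 0
  · have hne := norm_ne_zero_iff.2 (hσ.apply_ne_zero hx)
    have hσx := σ.continuous.continuousAt (x := x)
    exact (hgauge.continuousAt.div hσx.norm hne).smul hσx

lemma gauge_pos_of_bounded (hK0 : K ∈ 𝓝 0) (hKb : Bornology.IsBounded K) {x : V} (hx : x ≠ 0) :
    0 < gauge K x :=
  (gauge_pos (absorbent_nhds_zero hK0) ((NormedSpace.isVonNBounded_iff ℝ).2 hKb)).2 hx

lemma exists_pos_radialRescale_eq_smul (hσ : PosHomogeneous σ) (hK0 : K ∈ 𝓝 0)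
    (hKb : Bornology.IsBounded K) (x : V) : ∃ c : ℝ, 0 < c ∧ radialRescale K σ x = c • σ x := by
  rcases eq_or_ne x 0 with rfl | hx
  · exact ⟨1, one_pos, by simp [radialRescale, hσ.map_zero]⟩
  · exact ⟨_, div_pos (gauge_pos_of_bounded hK0 hKb hx) (norm_pos_iff.2 (hσ.apply_ne_zero hx)), rfl⟩

lemma bijective_radialRescale (hσ : PosHomogeneous σ) (hK0 : K ∈ 𝓝 0)
    (hKb : Bornology.IsBounded K) : Function.Bijective (radialRescale K σ) := by
  have hσ' : PosHomogeneous σ.symm := PosHomogeneous.equiv_symm (σ := σ.toEquiv) hσ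
  refine Function.bijective_iff_has_inverse.2
    ⟨fun y => (‖y‖ / gauge K (σ.symm y)) • σ.symm y, fun x => ?_, fun y => ?_⟩
  · obtain ⟨c, hc, hx⟩ := exists_pos_radialRescale_eq_smul hσ hK0 hKb x
    rcases eq_or_ne x 0 with rfl | hx0
    · simp [radialRescale, hσ.map_zero, hσ'.map_zero]
    have hg := (gauge_pos_of_bounded hK0 hKb hx0).ne'
    beta_reduce
    rw [norm_radialRescale hσ, hx, hσ' hc.le, σ.symm_apply_apply,
      posHomogeneous_gauge K hc.le, smul_smul, smul_eq_mul]
    convert one_smul ℝ x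
    field_simp
  · rcases eq_or_ne y 0 with rfl | hy
    · simp [radialRescale, hσ'.map_zero]
    have hx0 : σ.symm y ≠ 0 := fun h => hy (by rw [← σ.apply_symm_apply y, h, hσ.map_zero])
    have hg := gauge_pos_of_bounded hK0 hKb hx0
    have hc : 0 ≤ ‖y‖ / gauge K (σ.symm y) := by positivity
    have hy' := norm_ne_zero_iff.2 hy
    rw [radialRescale, hσ hc, posHomogeneous_gauge K hc, σ.apply_symm_apply, norm_smul,
      Real.norm_of_nonneg hc, smul_smul, smul_eq_mul]
    convert one_smul ℝ y
    field_simp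

lemma gauge_le_one_iff_mem (hK : Convex ℝ K) (hK0 : K ∈ 𝓝 0) (hKc : IsClosed K) {x : V} :
    gauge K x ≤ 1 ↔ x ∈ K := by
  rw [gauge_le_one_iff_mem_closure hK hK0, hKc.closure_eq]

end RadialRescale

section HalfSpace

variable {V E : Type*} [NormedAddCommGroup V] [NormedSpace ℝ V] [FiniteDimensional ℝ V]
  [NormedAddCommGroup E] [InnerProductSpace ℝ E] [FiniteDimensional ℝ E] {s : V → ℝ} {v : V} {e : E}

lemma exists_continuousLinearEquiv_apply_eq (hVE : finrank ℝ V = finrank ℝ E) (hv : v ≠ 0)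
    (he : e ≠ 0) : ∃ T : V ≃L[ℝ] E, T v = e := by
  let T := ContinuousLinearEquiv.ofFinrankEq hVE
  obtain ⟨A, hA⟩ := SeparatingDual.exists_continuousLinearEquiv_apply_eq (R := ℝ)
    (T.map_ne_zero_iff.2 hv) he
  exact ⟨T.trans A, hA⟩

lemma exists_shear (hVE : finrank ℝ V = finrank ℝ E) (he : ‖e‖ = 1) (hs : Continuous s)
    (hhom : PosHomogeneous s) (hshift : ∀ x (t : ℝ), s (x + t • v) = s x + t) :
    ∃ σ : V ≃ₜ E, PosHomogeneous σ ∧ ∀ x, ⟪e, σ x⟫ = s x := by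
  have hv : v ≠ 0 := by
    rintro rfl
    simpa using hshift 0 1
  obtain ⟨T, hT⟩ := exists_continuousLinearEquiv_apply_eq hVE hv
    (norm_ne_zero_iff.1 (he ▸ one_ne_zero))
  let σ : V ≃ₜ E :=
    { toFun x := T x + (s x - ⟪e, T x⟫) • e
      invFun y := T.symm y + (⟪e, y⟫ - s (T.symm y)) • v
      left_inv x := by
        simp only [map_add, map_smul, inner_add_smul_self he, hshift, T.symm_apply_apply,
          T.symm_apply_eq.2 hT.symm]
        module
      right_inv y := by
        simp only [map_add, map_smul, inner_add_smul_self he, hshift, hT, T.apply_symm_apply]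
        module
      continuous_toFun := by fun_prop
      continuous_invFun := by fun_prop }
  refine ⟨σ, fun c hc x => ?_, fun x => ?_⟩
  · change T (c • x) + (s (c • x) - ⟪e, T (c • x)⟫) • e = c • (T x + (s x - ⟪e, T x⟫) • e)
    rw [map_smul, hhom hc, real_inner_smul_right, smul_eq_mul]
    module
  · exact (inner_add_smul_self he _ _).trans (add_sub_cancel _ _)

lemma exists_bijOn_ball (hVE : finrank ℝ V = finrank ℝ E) (he : ‖e‖ = 1)
    (hs : Continuous s) (hhom : PosHomogeneous s) (hshift : ∀ x (t : ℝ), s (x + t • v) = s x + t)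
    {K : Set V} (hK : Convex ℝ K) (hK0 : K ∈ 𝓝 0) (hKc : IsCompact K) :
    ∃ f : V → E, Continuous f ∧ BijOn f {x | x ∈ K ∧ 0 ≤ s x} {y | ‖y‖ ≤ 1} ∧
      ∀ x ∈ K, ‖f x‖ = 1 ∧ ⟪e, f x⟫ ≤ 0 ↔ s x = 0 := by
  obtain ⟨σ, hσ, hσs⟩ := exists_shear hVE he hs hhom hshift
  have hball (x : V) : ‖radialRescale K σ x‖ ≤ 1 ↔ x ∈ K := by
    rw [norm_radialRescale hσ, gauge_le_one_iff_mem hK hK0 hKc.isClosed]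
  have hheight (x : V) : ∃ c : ℝ, 0 < c ∧ ⟪e, radialRescale K σ x⟫ = c * s x := by
    obtain ⟨c, hc, hx⟩ := exists_pos_radialRescale_eq_smul hσ hK0 hKc.isBounded x
    exact ⟨c, hc, by rw [hx, real_inner_smul_right, hσs]⟩
  have hupper (x : V) : 0 ≤ ⟪e, radialRescale K σ x⟫ ↔ 0 ≤ s x := by
    obtain ⟨c, hc, hx⟩ := hheight x
    rw [hx, mul_nonneg_iff_of_pos_left hc]
  have hequator (x : V) : ⟪e, radialRescale K σ x⟫ = 0 ↔ s x = 0 := by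
    obtain ⟨c, hc, hx⟩ := hheight x
    rw [hx, mul_eq_zero_iff_left hc.ne']
  have hbij : BijOn (radialRescale K σ) {x | x ∈ K ∧ 0 ≤ s x} {z | ‖z‖ ≤ 1 ∧ 0 ≤ ⟪e, z⟫} :=
    (Equiv.ofBijective _ (bijective_radialRescale hσ hK0 hKc.isBounded)).bijOn fun x =>
      and_congr (hball x) (hupper x)
  refine ⟨verticalStretch e ∘ radialRescale K σ, (continuous_verticalStretch e).comp
    (continuous_radialRescale hσ hK hK0), (bijOn_verticalStretch he).comp hbij, fun x hx => ?_⟩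
  rw [← hequator]
  exact verticalStretch_mem_lower_hemisphere_iff he ((hball x).2 hx)

theorem exists_homeomorph_ball_lower_hemisphere (hVE : finrank ℝ V = finrank ℝ E) (he : ‖e‖ = 1)
    (hs : Continuous s) (hhom : PosHomogeneous s) (hshift : ∀ x (t : ℝ), s (x + t • v) = s x + t)
    {K : Set V} (hK : Convex ℝ K) (hK0 : K ∈ 𝓝 0) (hKc : IsClosed K)
    (hKs : IsCompact {x | x ∈ K ∧ 0 ≤ s x}) :
    ∃ φ : {x // x ∈ K ∧ 0 ≤ s x} ≃ₜ {y : E // ‖y‖ ≤ 1},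
      ∀ x, ‖(φ x : E)‖ = 1 ∧ ⟪e, (φ x : E)⟫ ≤ 0 ↔ s x = 0 := by
  -- `K` may be unbounded, but a large ball does not truncate `K ∩ {0 ≤ s}`.
  obtain ⟨R, hR, hsub⟩ := hKs.isBounded.subset_closedBall_lt 0 0
  obtain ⟨f, hf, hbij, hboundary⟩ := exists_bijOn_ball hVE he hs hhom hshift
    (hK.inter (convex_closedBall 0 R)) (Filter.inter_mem hK0 (Metric.closedBall_mem_nhds 0 hR))
    ((isCompact_closedBall 0 R).inter_left hKc)
  have htrunc : {x | x ∈ K ∩ Metric.closedBall 0 R ∧ 0 ≤ s x} = {x | x ∈ K ∧ 0 ≤ s x} :=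
    Set.ext fun x => ⟨fun hx => ⟨hx.1.1, hx.2⟩, fun hx => ⟨⟨hx.1, hsub hx⟩, hx.2⟩⟩
  rw [htrunc] at hbij
  obtain ⟨φ, hφ⟩ := exists_homeomorph_of_bijOn hKs hf.continuousOn hbij
  refine ⟨φ, fun x => ?_⟩
  rw [hφ x]
  exact hboundary x ⟨x.2.1, hsub x.2⟩

end HalfSpace

section Flattening

lemma exists_add_vectorSpan_mem_nhds_zero {F : Type*} [NormedAddCommGroup F] [NormedSpace ℝ F]
    [FiniteDimensional ℝ F] {C : Set F} (hC : Convex ℝ C) (hne : C.Nonempty) :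
    ∃ c ∈ C, {d : vectorSpan ℝ C | c + d ∈ C} ∈ 𝓝 0 := by
  obtain ⟨_, c, hc, rfl⟩ := hne.intrinsicInterior hC
  have hnhds : ((↑) ⁻¹' C : Set (affineSpan ℝ C)) ∈ 𝓝 c := mem_interior_iff_mem_nhds.1 hc
  have hmem (d : vectorSpan ℝ C) : (c : F) + d ∈ affineSpan ℝ C := by
    rw [add_comm]
    exact AffineSubspace.vadd_mem_of_mem_direction (by rw [direction_affineSpan]; exact d.2) c.2
  let translate (d : vectorSpan ℝ C) : affineSpan ℝ C := ⟨c + d, hmem d⟩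
  have hcont : Continuous translate := by fun_prop
  have hzero : translate 0 = c := Subtype.ext (add_zero (c : F))
  exact ⟨c, show c ∈ ((↑) ⁻¹' C : Set (affineSpan ℝ C)) from mem_of_mem_nhds hnhds,
    hcont.continuousAt.preimage_mem_nhds (hzero.symm ▸ hnhds)⟩

/-- The hyperplane `∑ i, x i = 0`. -/
def sumZero (ι : Type*) [Fintype ι] : Submodule ℝ (EuclideanSpace ℝ ι) where
  carrier := {x | ∑ i, x i = 0}
  add_mem' hx hy := by simp_all [Finset.sum_add_distrib]
  zero_mem' := by simp
  smul_mem' c x hx := by simp_all [← Finset.mul_sum]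

variable {ι : Type*} [Fintype ι]

lemma mem_sumZero {x : EuclideanSpace ℝ ι} : x ∈ sumZero ι ↔ ∑ i, x i = 0 := Iff.rfl

lemma finrank_sumZero_add_one [Nonempty ι] :
    finrank ℝ (sumZero ι) + 1 = Fintype.card ι := by
  classical
  let sum : Dual ℝ (EuclideanSpace ℝ ι) :=
    ∑ i, LinearMap.proj i ∘ₗ (WithLp.linearEquiv 2 ℝ (ι → ℝ)).toLinearMap
  have hker : sumZero ι = LinearMap.ker sum := by
    ext x
    simp [mem_sumZero, sum]
  have hsum : sum ≠ 0 := by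
    intro h
    have := congr($h (EuclideanSpace.single (Classical.arbitrary ι) 1))
    simp [sum] at this
  rw [hker, Dual.finrank_ker_add_one_of_ne_zero hsum, finrank_euclideanSpace]

lemma sumZero_le_of_single_sub_single_mem [DecidableEq ι] {D : Submodule ℝ (EuclideanSpace ℝ ι)}
    (hD : ∀ i j, EuclideanSpace.single i (1 : ℝ) - EuclideanSpace.single j 1 ∈ D) :
    sumZero ι ≤ D := by
  intro x hx
  rcases isEmpty_or_nonempty ι with _ | ⟨⟨j⟩⟩
  · rw [Subsingleton.elim x 0]
    exact D.zero_mem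
  have hx' : x = ∑ i, x i • (EuclideanSpace.single i (1 : ℝ) - EuclideanSpace.single j 1) := by
    simp only [smul_sub, Finset.sum_sub_distrib, ← Finset.sum_smul, mem_sumZero.1 hx,
      zero_smul, sub_zero]
    ext i
    simp [Pi.single_apply]
  rw [hx']
  exact D.sum_mem fun i _ => D.smul_mem _ (hD i j)

end Flattening

section Permutahedron

lemma permVec_sub_permVec_mem_sumZero (n : ℕ) (σ τ : Equiv.Perm (Fin n)) :
    permVec n σ - permVec n τ ∈ sumZero (Fin n) := by
  have hsum (π : Equiv.Perm (Fin n)) : ∑ i, permVec n π i = ∑ i : Fin n, ((i : ℕ) + 1 : ℝ) :=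
    Equiv.sum_comp π.symm fun i : Fin n => ((i : ℕ) + 1 : ℝ)
  simp only [mem_sumZero, PiLp.sub_apply, Finset.sum_sub_distrib, hsum, sub_self]

lemma permVec_refl_sub_permVec_swap {n : ℕ} (i j : Fin n) :
    permVec n (Equiv.refl _) - permVec n (Equiv.swap i j) =
      ((i : ℝ) - j) • (EuclideanSpace.single i 1 - EuclideanSpace.single j 1) := by
  ext l
  simp only [permVec, Equiv.symm_swap, PiLp.sub_apply, PiLp.smul_apply, smul_eq_mul,
    PiLp.single_apply, Equiv.refl_symm, Equiv.refl_apply, Equiv.swap_apply_def]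
  split_ifs <;> simp_all

lemma vectorSpan_permutahedron (n : ℕ) : vectorSpan ℝ (permutahedron n) = sumZero (Fin n) := by
  rw [permutahedron, ← direction_affineSpan, affineSpan_convexHull, direction_affineSpan]
  apply le_antisymm
  · rw [vectorSpan_def, Submodule.span_le]
    rintro _ ⟨_, ⟨σ, rfl⟩, _, ⟨τ, rfl⟩, rfl⟩
    exact permVec_sub_permVec_mem_sumZero n σ τ
  · refine sumZero_le_of_single_sub_single_mem fun i j => ?_
    rcases eq_or_ne i j with rfl | hij
    · rw [sub_self]
      exact Submodule.zero_mem _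
    have hne : (i : ℝ) - j ≠ 0 := sub_ne_zero.2 (by simpa [Fin.val_inj] using hij)
    rw [← Submodule.smul_mem_iff _ hne, ← permVec_refl_sub_permVec_swap]
    exact vsub_mem_vectorSpan ℝ (mem_range_self _) (mem_range_self _)

lemma finrank_vectorSpan_permutahedron_add_one {n : ℕ} (hn : 1 ≤ n) :
    finrank ℝ (vectorSpan ℝ (permutahedron n)) + 1 = n := by
  have : Nonempty (Fin n) := ⟨⟨0, hn⟩⟩
  rw [vectorSpan_permutahedron, finrank_sumZero_add_one, Fintype.card_fin]

lemma sum_finrank_vectorSpan_permutahedron {ι : Type*} [Fintype ι] {m : ι → ℕ}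
    (hm : ∀ r, 1 ≤ m r) :
    ∑ r, finrank ℝ (vectorSpan ℝ (permutahedron (m r))) + Fintype.card ι = ∑ r, m r := by
  rw [← Finset.card_univ, Finset.card_eq_sum_ones, ← Finset.sum_add_distrib]
  exact Finset.sum_congr rfl fun r _ => finrank_vectorSpan_permutahedron_add_one (hm r)

lemma isCompact_permutahedron (n : ℕ) : IsCompact (permutahedron n) :=
  (finite_range _).isCompact_convexHull ℝ

lemma convex_permutahedron (n : ℕ) : Convex ℝ (permutahedron n) := convex_convexHull ℝ _

lemma permutahedron_nonempty (n : ℕ) : (permutahedron n).Nonempty :=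
  (range_nonempty _).convexHull

end Permutahedron

section Simplex

/-- The least coordinate with index in `I`. On a simplex it vanishes exactly on the union of the
facets indexed by `I`. -/
noncomputable def minCoord {ι : Type*} (I : Finset ι) (hI : I.Nonempty) (x : EuclideanSpace ℝ ι) :
    ℝ :=
  I.inf' hI fun i => x i

variable {ι : Type*} {I : Finset ι} {hI : I.Nonempty}

lemma continuous_minCoord : Continuous (minCoord I hI) :=
  Continuous.finset_inf'_apply hI fun _ _ => by fun_prop

lemma posHomogeneous_minCoord : PosHomogeneous (minCoord I hI) := by
  intro c hc x
  exact (Finset.apply_inf'_eq_inf'_comp hI (c * ·) fun a b => mul_min_of_nonneg a b hc).symm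

lemma minCoord_add_smul {v : EuclideanSpace ℝ ι} (hv : ∀ i ∈ I, v i = 1)
    (x : EuclideanSpace ℝ ι) (t : ℝ) : minCoord I hI (x + t • v) = minCoord I hI x + t := by
  have hshift : minCoord I hI (x + t • v) = I.inf' hI fun i => x i + t :=
    Finset.inf'_congr hI rfl fun i hi => by simp [hv i hi]
  exact hshift.trans
    (Finset.apply_inf'_eq_inf'_comp hI (· + t) fun a b => (min_add_add_right a b t).symm).symm

lemma minCoord_nonneg_iff {x : EuclideanSpace ℝ ι} : 0 ≤ minCoord I hI x ↔ ∀ i ∈ I, 0 ≤ x i :=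
  Finset.le_inf'_iff hI _

lemma minCoord_eq_zero_iff {x : EuclideanSpace ℝ ι} (hx : 0 ≤ minCoord I hI x) :
    minCoord I hI x = 0 ↔ ∃ i ∈ I, x i = 0 := by
  constructor
  · intro h
    obtain ⟨i, hi, hmin⟩ := Finset.exists_mem_eq_inf' hI fun i => x i
    exact ⟨i, hi, hmin.symm.trans h⟩
  · rintro ⟨i, hi, h⟩
    exact le_antisymm ((Finset.inf'_le _ hi).trans h.le) hx

lemma isCompact_simplexSet (k : ℕ) : IsCompact (simplexSet k) := by
  have himage : simplexSet k = WithLp.toLp 2 '' stdSimplex ℝ (Fin (k + 1)) :=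
    Set.ext fun x => ⟨fun hx => ⟨x.ofLp, hx, rfl⟩, by rintro ⟨_, hy, rfl⟩; exact hy⟩
  rw [himage]
  exact (isCompact_stdSimplex ℝ _).image (PiLp.continuous_toLp 2 _)

lemma exists_mem_simplexSet_eq_zero_iff {k : ℕ} {I : Finset (Fin (k + 1))} (hI : I ≠ Finset.univ) :
    ∃ a ∈ simplexSet k, ∀ i, a i = 0 ↔ i ∈ I := by
  have hcard : ((Iᶜ).card : ℝ) ≠ 0 := by simpa [Finset.card_eq_zero] using hI
  refine ⟨WithLp.toLp 2 fun i => if i ∈ I then 0 else ((Iᶜ).card : ℝ)⁻¹, ⟨fun i => ?_, ?_⟩,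
    fun i => ?_⟩
  · dsimp only
    positivity
  · simp [Finset.sum_ite, Finset.filter_notMem_eq_sdiff, ← Finset.compl_eq_univ_sdiff, hcard]
  · by_cases hi : i ∈ I <;> simp [hi, hI]

variable {k : ℕ} {I : Finset (Fin (k + 1))} {hI : I.Nonempty} {a : EuclideanSpace ℝ (Fin (k + 1))}

lemma sub_mem_sumZero_of_mem_simplexSet {x : EuclideanSpace ℝ (Fin (k + 1))} (hx : x ∈ simplexSet k)
    (ha : a ∈ simplexSet k) : x - a ∈ sumZero (Fin (k + 1)) := by
  simp [mem_sumZero, hx.2, ha.2]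

lemma add_mem_simplexSet_iff (ha : a ∈ simplexSet k) (haI : ∀ i ∈ I, a i = 0)
    {x : EuclideanSpace ℝ (Fin (k + 1))} (hx : x ∈ sumZero (Fin (k + 1))) :
    a + x ∈ simplexSet k ↔ (∀ i ∉ I, 0 ≤ a i + x i) ∧ 0 ≤ minCoord I hI x := by
  have hsum : ∑ i, (a + x) i = 1 := by simp [Finset.sum_add_distrib, ha.2, mem_sumZero.1 hx]
  rw [minCoord_nonneg_iff]
  constructor
  · rintro ⟨hnonneg, -⟩
    exact ⟨fun i _ => hnonneg i, fun i hi => by simpa [haI i hi] using hnonneg i⟩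
  · rintro ⟨hout, hin⟩
    refine ⟨fun i => ?_, hsum⟩
    by_cases hi : i ∈ I
    · simpa [haI i hi] using hin i hi
    · exact hout i hi

lemma exists_mem_sumZero_eq_one (ha : a ∈ simplexSet k) (haI : ∀ i ∈ I, a i = 0) :
    ∃ v ∈ sumZero (Fin (k + 1)), ∀ i ∈ I, v i = 1 := by
  -- The vector of ones, corrected by a multiple of `a` to have coordinate sum zero.
  refine ⟨WithLp.toLp 2 fun i => 1 - (k + 1) * a i, ?_, fun i hi => by simp [haI i hi]⟩
  simp [mem_sumZero, ← Finset.mul_sum, ha.2]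

end Simplex

section Product

variable {ι : Type*} {F : ι → Type*} {C : ∀ r, Set (F r)} {k : ℕ} {I : Finset (Fin (k + 1))}

/-- The product `(∏ r, C r) × Δ^k`. -/
def simplexProduct (C : ∀ r, Set (F r)) (k : ℕ) :
    Set ((∀ r, F r) × EuclideanSpace ℝ (Fin (k + 1))) :=
  {p | (∀ r, p.1 r ∈ C r) ∧ p.2 ∈ simplexSet k}

/-- The product `(∏ r, C r) × Δ^k`, with `Δ^k` relaxed to the set of all `x` satisfying the
inequalities `0 ≤ x i` with `i ∉ I` only. -/
def relaxedProduct (C : ∀ r, Set (F r)) (I : Finset (Fin (k + 1))) :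
    Set ((∀ r, F r) × EuclideanSpace ℝ (Fin (k + 1))) :=
  {p | (∀ r, p.1 r ∈ C r) ∧ ∀ i ∉ I, 0 ≤ p.2 i}

lemma isCompact_simplexProduct [∀ r, TopologicalSpace (F r)] (hC : ∀ r, IsCompact (C r)) :
    IsCompact (simplexProduct C k) := by
  have hprod : simplexProduct C k = univ.pi C ×ˢ simplexSet k := by
    ext p
    simp [simplexProduct]
  exact hprod ▸ (isCompact_univ_pi hC).prod (isCompact_simplexSet k)

lemma isClosed_relaxedProduct [∀ r, TopologicalSpace (F r)] (hC : ∀ r, IsClosed (C r)) :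
    IsClosed (relaxedProduct C I) := by
  simp only [relaxedProduct, ofPred_and, ofPred_forall]
  exact (isClosed_iInter fun r => (hC r).preimage (by fun_prop)).inter
    (isClosed_iInter fun i => isClosed_iInter fun _ => isClosed_le (by fun_prop) (by fun_prop))

lemma convex_relaxedProduct [∀ r, AddCommGroup (F r)] [∀ r, Module ℝ (F r)]
    (hC : ∀ r, Convex ℝ (C r)) : Convex ℝ (relaxedProduct C I) := by
  intro p hp q hq s t hs ht hst
  refine ⟨fun r => hC r (hp.1 r) (hq.1 r) hs ht hst, fun i hi => ?_⟩
  exact add_nonneg (mul_nonneg hs (hp.2 i hi)) (mul_nonneg ht (hq.2 i hi))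

variable [∀ r, NormedAddCommGroup (F r)] [∀ r, NormedSpace ℝ (F r)]

/-- The space of directions of the affine span of `(∏ r, C r) × Δ^k`. -/
abbrev ProductDirection (C : ∀ r, Set (F r)) (k : ℕ) : Type _ :=
  (∀ r, vectorSpan ℝ (C r)) × sumZero (Fin (k + 1))

lemma finrank_productDirection [Fintype ι] [∀ r, FiniteDimensional ℝ (F r)] :
    finrank ℝ (ProductDirection C k) = ∑ r, finrank ℝ (vectorSpan ℝ (C r)) + k := by
  have hk : finrank ℝ (sumZero (Fin (k + 1))) + 1 = k + 1 :=
    finrank_sumZero_add_one.trans (Fintype.card_fin _)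
  rw [finrank_prod, finrank_pi_fintype, Nat.add_right_cancel hk]

/-- The linear inclusion of the directions of the affine span of `(∏ r, C r) × Δ^k`. -/
def directionInclusion (C : ∀ r, Set (F r)) (k : ℕ) :
    ProductDirection C k →ₗ[ℝ] (∀ r, F r) × EuclideanSpace ℝ (Fin (k + 1)) :=
  (LinearMap.piMap fun r => (vectorSpan ℝ (C r)).subtype).prodMap (Submodule.subtype _)

lemma directionInclusion_injective : Function.Injective (directionInclusion C k) :=
  Function.Injective.prodMap (Function.Injective.piMap fun _ => Subtype.val_injective)
    Subtype.val_injective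

lemma isClosedEmbedding_directionInclusion [Finite ι] [∀ r, FiniteDimensional ℝ (F r)] :
    IsClosedEmbedding (directionInclusion C k) :=
  LinearMap.isClosedEmbedding_of_injective (LinearMap.ker_eq_bot.2 directionInclusion_injective)

/-- The directions which lead from the base point `(c, a)` into `relaxedProduct C I`. -/
def relaxedDirections (C : ∀ r, Set (F r)) (c : ∀ r, F r) (a : EuclideanSpace ℝ (Fin (k + 1)))
    (I : Finset (Fin (k + 1))) : Set (ProductDirection C k) :=
  {d | (c, a) + directionInclusion C k d ∈ relaxedProduct C I}

variable {hI : I.Nonempty} {c : ∀ r, F r} {a : EuclideanSpace ℝ (Fin (k + 1))}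

lemma convex_relaxedDirections (hC : ∀ r, Convex ℝ (C r)) :
    Convex ℝ (relaxedDirections C c a I) :=
  ((convex_relaxedProduct hC).translate_preimage_right (c, a)).linear_preimage _

lemma isClosed_relaxedDirections [Finite ι] [∀ r, FiniteDimensional ℝ (F r)]
    (hC : ∀ r, IsClosed (C r)) : IsClosed (relaxedDirections C c a I) :=
  (isClosed_relaxedProduct hC).preimage
    (isClosedEmbedding_directionInclusion.continuous.const_add (c, a))

lemma relaxedDirections_mem_nhds_zero [Finite ι]
    (hc : ∀ r, {d : vectorSpan ℝ (C r) | c r + d ∈ C r} ∈ 𝓝 0) (ha : ∀ i ∉ I, 0 < a i) :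
    relaxedDirections C c a I ∈ 𝓝 0 := by
  have hfactor (r : ι) : ∀ᶠ d : ProductDirection C k in 𝓝 0, c r + d.1 r ∈ C r :=
    (show Continuous fun d : ProductDirection C k => d.1 r by fun_prop).tendsto' 0 0 rfl (hc r)
  have hcoord (i : Fin (k + 1)) :
      ∀ᶠ d : ProductDirection C k in 𝓝 0, i ∉ I → 0 ≤ a i + d.2.val i := by
    by_cases hi : i ∈ I
    · exact Filter.Eventually.of_forall fun _ h => absurd hi h
    have hcont : Continuous fun d : ProductDirection C k => a i + d.2.val i := by fun_prop
    filter_upwards [hcont.tendsto' 0 (a i) (by simp) (Ici_mem_nhds (ha i hi))] with d hd _ using hd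
  filter_upwards [Filter.eventually_all.2 hfactor, Filter.eventually_all.2 hcoord] with d hd₁ hd₂
    using ⟨hd₁, hd₂⟩

lemma add_directionInclusion_mem_simplexProduct_iff (ha : a ∈ simplexSet k)
    (haI : ∀ i ∈ I, a i = 0) (d : ProductDirection C k) :
    (c, a) + directionInclusion C k d ∈ simplexProduct C k ↔
      d ∈ relaxedDirections C c a I ∧ 0 ≤ minCoord I hI d.2.val :=
  (and_congr_right' (add_mem_simplexSet_iff ha haI d.2.2)).trans and_assoc.symm

lemma exists_homeomorph_simplexProduct [Finite ι] [∀ r, FiniteDimensional ℝ (F r)]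
    (hC : ∀ r, IsCompact (C r)) (hc : ∀ r, c r ∈ C r) (ha : a ∈ simplexSet k)
    (haI : ∀ i ∈ I, a i = 0) :
    ∃ ψ : {d // d ∈ relaxedDirections C c a I ∧ 0 ≤ minCoord I hI d.2.val} ≃ₜ simplexProduct C k,
      ∀ d, ψ d = (c, a) + directionInclusion C k d := by
  let chart (d : ProductDirection C k) := (c, a) + directionInclusion C k d
  have hchart : IsClosedEmbedding chart :=
    (Homeomorph.addLeft (c, a)).isClosedEmbedding.comp isClosedEmbedding_directionInclusion
  have hrange : simplexProduct C k ⊆ range chart := by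
    intro p hp
    refine ⟨(fun r => ⟨p.1 r - c r, vsub_mem_vectorSpan ℝ (hp.1 r) (hc r)⟩,
      ⟨p.2 - a, sub_mem_sumZero_of_mem_simplexSet hp.2 ha⟩), ?_⟩
    exact Prod.ext (funext fun r => add_sub_cancel _ _) (add_sub_cancel _ _)
  have hbij : BijOn chart (chart ⁻¹' simplexProduct C k) (simplexProduct C k) :=
    ⟨mapsTo_preimage _ _, hchart.injective.injOn, (image_preimage_eq_of_subset hrange).ge⟩
  have hdomain : chart ⁻¹' simplexProduct C k =
      {d | d ∈ relaxedDirections C c a I ∧ 0 ≤ minCoord I hI d.2.val} :=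
    Set.ext (add_directionInclusion_mem_simplexProduct_iff ha haI)
  have hcompact := hchart.isCompact_preimage (isCompact_simplexProduct (k := k) hC)
  rw [hdomain] at hbij hcompact
  exact exists_homeomorph_of_bijOn hcompact hchart.continuous.continuousOn hbij

end Product

theorem product_homeo_ball_general {ι : Type*} [Fintype ι] {F : ι → Type*}
    [∀ r, NormedAddCommGroup (F r)] [∀ r, NormedSpace ℝ (F r)] [∀ r, FiniteDimensional ℝ (F r)]
    {C : ∀ r, Set (F r)} (hcompact : ∀ r, IsCompact (C r)) (hconvex : ∀ r, Convex ℝ (C r))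
    (hnonempty : ∀ r, (C r).Nonempty) {k : ℕ} {I : Finset (Fin (k + 1))} (hI : I.Nonempty)
    (hI' : I ≠ Finset.univ) {E : Type*} [NormedAddCommGroup E] [InnerProductSpace ℝ E]
    [FiniteDimensional ℝ E] (hE : ∑ r, finrank ℝ (vectorSpan ℝ (C r)) + k = finrank ℝ E)
    {e : E} (he : ‖e‖ = 1) :
    ∃ φ : simplexProduct C k ≃ₜ {y : E // ‖y‖ ≤ 1},
      ∀ p, (∃ i ∈ I, p.val.2 i = 0) ↔ ‖(φ p).val‖ = 1 ∧ ⟪e, (φ p).val⟫ ≤ 0 := by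
  choose c hc hcnhds using fun r => exists_add_vectorSpan_mem_nhds_zero (hconvex r) (hnonempty r)
  obtain ⟨a, ha, haI⟩ := exists_mem_simplexSet_eq_zero_iff hI'
  have haI₀ : ∀ i ∈ I, a i = 0 := fun i => (haI i).2
  have haI_pos : ∀ i ∉ I, 0 < a i := fun i hi => (ha.1 i).lt_of_ne' (mt (haI i).1 hi)
  obtain ⟨v, hv, hvI⟩ := exists_mem_sumZero_eq_one ha haI₀
  obtain ⟨ψ, hψ⟩ := exists_homeomorph_simplexProduct (hI := hI) hcompact hc ha haI₀
  let s (d : ProductDirection C k) := minCoord I hI d.2.val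
  have hs : Continuous s := continuous_minCoord.comp (by fun_prop)
  have hhom : PosHomogeneous s := fun _ ht _ => posHomogeneous_minCoord ht _
  have hshift (d : ProductDirection C k) (t : ℝ) : s (d + t • (0, ⟨v, hv⟩)) = s d + t :=
    minCoord_add_smul hvI d.2.val t
  have hdomain : IsCompact {d | d ∈ relaxedDirections C c a I ∧ 0 ≤ s d} :=
    have := isCompact_iff_compactSpace.1 (isCompact_simplexProduct (k := k) hcompact)
    isCompact_iff_compactSpace.2 ψ.symm.compactSpace
  obtain ⟨φ, hφ⟩ := exists_homeomorph_ball_lower_hemisphere (finrank_productDirection.trans hE) he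
    hs hhom hshift (convex_relaxedDirections hconvex)
    (relaxedDirections_mem_nhds_zero hcnhds haI_pos)
    (isClosed_relaxedDirections fun r => (hcompact r).isClosed) hdomain
  refine ⟨ψ.symm.trans φ, fun p => ?_⟩
  obtain ⟨d, rfl⟩ := ψ.surjective p
  have hfacet : ∀ i ∈ I, (ψ d).val.2 i = d.val.2.val i := by
    intro i hi
    rw [hψ d]
    exact (congrArg (· + _) (haI₀ i hi)).trans (zero_add _)
  rw [Homeomorph.trans_apply, ψ.symm_apply_apply, hφ, minCoord_eq_zero_iff d.2.2]
  exact exists_congr fun i => and_congr_right fun hi => by rw [hfacet i hi]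

/-- For `n ≥ 3`, `k ≥ 2` and `m₁ + ⋯ + m_k = n − 1` (`m_r ≥ 1`), the product
`X = P_{m₁} × ⋯ × P_{m_k} × Δ^k` is homeomorphic to the closed unit ball `D^{n−1}` by a
homeomorphism carrying `B = P_{m₁} × ⋯ × P_{m_k} × (F_2 ∪ ⋯ ∪ F_k)` (the facets `F_i` of
`Δ^k` being numbered `1, …, k+1`) exactly onto the closed lower hemisphere `S^{n−2}₋`. -/
theorem product_homeo_ball (n k : ℕ) (hn : 3 ≤ n) (hk : 2 ≤ k) (m : Fin k → ℕ)
    (hm : ∀ r, 1 ≤ m r) (hsum : ∑ r, m r = n - 1) :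
    ∃ φ : {p : ((r : Fin k) → EuclideanSpace ℝ (Fin (m r))) ×
              EuclideanSpace ℝ (Fin (k + 1)) //
            (∀ r, p.1 r ∈ permutahedron (m r)) ∧ p.2 ∈ simplexSet k} ≃ₜ
          {y : EuclideanSpace ℝ (Fin (n - 1)) // ‖y‖ ≤ 1},
      ∀ p, ((∃ i : Fin (k + 1), 1 ≤ (i : ℕ) ∧ (i : ℕ) ≤ k - 1 ∧ p.val.2 i = 0) ↔
        (‖(φ p).val‖ = 1 ∧ (φ p).val ⟨n - 2, by omega⟩ ≤ 0)) := by
  have hE : ∑ r, finrank ℝ (vectorSpan ℝ (permutahedron (m r))) + k =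
      finrank ℝ (EuclideanSpace ℝ (Fin (n - 1))) := by
    simpa [hsum] using sum_finrank_vectorSpan_permutahedron hm
  obtain ⟨φ, hφ⟩ := product_homeo_ball_general (I := {i | 1 ≤ (i : ℕ) ∧ (i : ℕ) ≤ k - 1})
    (fun r => isCompact_permutahedron (m r)) (fun r => convex_permutahedron (m r))
    (fun r => permutahedron_nonempty (m r)) ⟨⟨1, by omega⟩, by simp; omega⟩
    (fun h => by simpa using congr(0 ∈ $h)) hE
    (e := EuclideanSpace.single ⟨n - 2, by omega⟩ 1) (by simp)
  simp only [Finset.mem_filter_univ, and_assoc, EuclideanSpace.inner_single_left, map_one,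
    one_mul] at hφ
  exact ⟨φ, hφ⟩
end
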